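/- Upper HJBI bound at the candidate volatility: there exist constants C > 0 and ψ₀ > 0 such that for every (t,s,y) ∈ D and every ψ ∈ (0,ψ₀), w^ψ_t(t,s,y) + sup_{ϑ ∈ ℝ} H^ψ(t,s,y; ϑ, σ^ψ(t,s,y)) ≤ C ψ³. -/

import Mathlib

open Set

/-- The data of the hedging problem with small uncertainty aversion: the constants
`T, K, ε, y_l, y_u`, the reference volatility `σ̄` (`sb`), the reference value `V̄` (`V`)
with its `s`-derivatives `Vs, Vss`, the penalty function `f` with its `ς`-derivatives
`f1, ..., f4`, the utility `U` with derivatives `U1, U2, U3`, and the correction terms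
`w̃` (`wt`) and `ŵ` (`wh`) together with their partial derivatives. -/
structure HedgeData where
  T : ℝ
  K : ℝ
  eps : ℝ
  yl : ℝ
  yu : ℝ
  sb : ℝ → ℝ → ℝ
  V : ℝ → ℝ → ℝ
  Vs : ℝ → ℝ → ℝ
  Vss : ℝ → ℝ → ℝ
  f : ℝ → ℝ → ℝ → ℝ → ℝ
  f1 : ℝ → ℝ → ℝ → ℝ → ℝ
  f2 : ℝ → ℝ → ℝ → ℝ → ℝ
  f3 : ℝ → ℝ → ℝ → ℝ → ℝ
  f4 : ℝ → ℝ → ℝ → ℝ → ℝ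
  U : ℝ → ℝ
  U1 : ℝ → ℝ
  U2 : ℝ → ℝ
  U3 : ℝ → ℝ
  wt : ℝ → ℝ → ℝ → ℝ
  wtT : ℝ → ℝ → ℝ → ℝ
  wtS : ℝ → ℝ → ℝ → ℝ
  wtY : ℝ → ℝ → ℝ → ℝ
  wtSS : ℝ → ℝ → ℝ → ℝ
  wtSY : ℝ → ℝ → ℝ → ℝ
  wtYY : ℝ → ℝ → ℝ → ℝ
  wh : ℝ → ℝ → ℝ → ℝ
  whT : ℝ → ℝ → ℝ → ℝ
  whS : ℝ → ℝ → ℝ → ℝ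
  whY : ℝ → ℝ → ℝ → ℝ
  whSS : ℝ → ℝ → ℝ → ℝ
  whSY : ℝ → ℝ → ℝ → ℝ
  whYY : ℝ → ℝ → ℝ → ℝ

/-- The candidate value function `w^ψ(t,s,y) = U(y) - U'(y) w̃(t,s,y) ψ + U'(y) ŵ(t,s,y) ψ²`. -/
noncomputable def HedgeData.wPsi (d : HedgeData) (ψ t s y : ℝ) : ℝ :=
  d.U y - d.U1 y * d.wt t s y * ψ + d.U1 y * d.wh t s y * ψ ^ 2

/-- Partial derivative `w^ψ_t`. -/
noncomputable def HedgeData.wPsiT (d : HedgeData) (ψ t s y : ℝ) : ℝ :=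
  -(d.U1 y * d.wtT t s y) * ψ + d.U1 y * d.whT t s y * ψ ^ 2

/-- Partial derivative `w^ψ_y`. -/
noncomputable def HedgeData.wPsiY (d : HedgeData) (ψ t s y : ℝ) : ℝ :=
  d.U1 y - (d.U2 y * d.wt t s y + d.U1 y * d.wtY t s y) * ψ
    + (d.U2 y * d.wh t s y + d.U1 y * d.whY t s y) * ψ ^ 2

/-- Partial derivative `w^ψ_ss`. -/
noncomputable def HedgeData.wPsiSS (d : HedgeData) (ψ t s y : ℝ) : ℝ :=
  -(d.U1 y * d.wtSS t s y) * ψ + d.U1 y * d.whSS t s y * ψ ^ 2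

/-- Partial derivative `w^ψ_sy`. -/
noncomputable def HedgeData.wPsiSY (d : HedgeData) (ψ t s y : ℝ) : ℝ :=
  -(d.U2 y * d.wtS t s y + d.U1 y * d.wtSY t s y) * ψ
    + (d.U2 y * d.whS t s y + d.U1 y * d.whSY t s y) * ψ ^ 2

/-- Partial derivative `w^ψ_yy`. -/
noncomputable def HedgeData.wPsiYY (d : HedgeData) (ψ t s y : ℝ) : ℝ :=
  d.U2 y - (d.U3 y * d.wt t s y + 2 * d.U2 y * d.wtY t s y + d.U1 y * d.wtYY t s y) * ψ
    + (d.U3 y * d.wh t s y + 2 * d.U2 y * d.whY t s y + d.U1 y * d.whYY t s y) * ψ ^ 2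

/-- `σ̃(t,s,y) = σ̄(t,s) s² V̄_ss(t,s) / f''(t,s,y;σ̄(t,s))`. -/
noncomputable def HedgeData.sigmaTilde (d : HedgeData) (t s y : ℝ) : ℝ :=
  d.sb t s * s ^ 2 * d.Vss t s / d.f2 t s y (d.sb t s)

/-- `θ̃(t,s,y) = w̃_s(t,s,y) + (U'(y)/U''(y)) w̃_sy(t,s,y)`. -/
noncomputable def HedgeData.thetaTilde (d : HedgeData) (t s y : ℝ) : ℝ :=
  d.wtS t s y + d.U1 y / d.U2 y * d.wtSY t s y

/-- The candidate volatility `σ^ψ = σ̄ + σ̃ ψ`. -/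
noncomputable def HedgeData.sigmaPsi (d : HedgeData) (ψ t s y : ℝ) : ℝ :=
  d.sb t s + d.sigmaTilde t s y * ψ

/-- The candidate strategy `θ^ψ = V̄_s + θ̃ ψ`. -/
noncomputable def HedgeData.thetaPsi (d : HedgeData) (ψ t s y : ℝ) : ℝ :=
  d.Vs t s + d.thetaTilde t s y * ψ

/-- The Hamiltonian `H^ψ(t,s,y;ϑ,ς)`. -/
noncomputable def HedgeData.Ham (d : HedgeData) (ψ t s y ϑ ς : ℝ) : ℝ :=
  1 / ψ * d.U1 y * d.f t s y ς
    + 1 / 2 * s ^ 2 * d.Vss t s * ((d.sb t s) ^ 2 - ς ^ 2) * d.wPsiY ψ t s y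
    + 1 / 2 * ς ^ 2 * s ^ 2 *
      (d.wPsiSS ψ t s y + 2 * (ϑ - d.Vs t s) * d.wPsiSY ψ t s y
        + (ϑ - d.Vs t s) ^ 2 * d.wPsiYY ψ t s y)

/-- The standing assumptions (Assumption 3.1 of the paper). -/
structure HedgeData.Assumptions (d : HedgeData) : Prop where
  hT : 0 < d.T
  hK : 1 < d.K
  heps : 0 < d.eps
  hy : d.yl < d.yu
  sb_mem : ∀ t ∈ Icc (0:ℝ) d.T, ∀ s ∈ Icc d.K⁻¹ d.K, d.sb t s ∈ Icc (0:ℝ) d.K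
  sb_lb : ∀ t ∈ Icc (0:ℝ) d.T, ∀ s ∈ Ioo d.K⁻¹ d.K, d.eps ≤ d.sb t s
  sb_ub : ∀ t ∈ Icc (0:ℝ) d.T, ∀ s ∈ Ioo d.K⁻¹ d.K, d.sb t s ≤ d.K - d.eps
  sb_bdry : ∀ t ∈ Icc (0:ℝ) d.T, d.sb t d.K⁻¹ = 0 ∧ d.sb t d.K = 0
  V_derivS : ∀ t ∈ Ioo (0:ℝ) d.T, ∀ s ∈ Ioo d.K⁻¹ d.K, HasDerivAt (d.V t) (d.Vs t s) s
  V_derivSS : ∀ t ∈ Ioo (0:ℝ) d.T, ∀ s ∈ Ioo d.K⁻¹ d.K, HasDerivAt (d.Vs t) (d.Vss t s) s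
  Vss_cont : ∀ t ∈ Ioo (0:ℝ) d.T, ContinuousOn (d.Vss t) (Ioo d.K⁻¹ d.K)
  Vss_bdd : ∀ t ∈ Ioo (0:ℝ) d.T, ∀ s ∈ Ioo d.K⁻¹ d.K, |s ^ 2 * d.Vss t s| ≤ d.K
  f_deriv1 : ∀ t s y ς : ℝ, HasDerivAt (d.f t s y) (d.f1 t s y ς) ς
  f_deriv2 : ∀ t s y ς : ℝ, HasDerivAt (d.f1 t s y) (d.f2 t s y ς) ς
  f_deriv3 : ∀ t s y ς : ℝ, HasDerivAt (d.f2 t s y) (d.f3 t s y ς) ς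
  f_deriv4 : ∀ t s y ς : ℝ, HasDerivAt (d.f3 t s y) (d.f4 t s y ς) ς
  f4_cont : ∀ t s y : ℝ, Continuous (d.f4 t s y)
  f_nonneg : ∀ t s y ς : ℝ, 0 ≤ ς → 0 ≤ d.f t s y ς
  f_min : ∀ t ∈ Ioo (0:ℝ) d.T, ∀ s ∈ Ioo d.K⁻¹ d.K, ∀ y ∈ Ioo d.yl d.yu,
    d.f t s y (d.sb t s) = 0 ∧ d.f1 t s y (d.sb t s) = 0
  f2_bdd : ∀ t ∈ Ioo (0:ℝ) d.T, ∀ s ∈ Ioo d.K⁻¹ d.K, ∀ y ∈ Ioo d.yl d.yu,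
    ∀ ς ∈ Icc (0:ℝ) d.K, 1 / d.K ≤ d.f2 t s y ς ∧ d.f2 t s y ς ≤ d.K
  f34_bdd : ∀ t ∈ Ioo (0:ℝ) d.T, ∀ s ∈ Ioo d.K⁻¹ d.K, ∀ y ∈ Ioo d.yl d.yu,
    ∀ ς ∈ Icc (0:ℝ) d.K, |d.f3 t s y ς| ≤ d.K ∧ |d.f4 t s y ς| ≤ d.K
  U_deriv1 : ∀ y : ℝ, HasDerivAt d.U (d.U1 y) y
  U_deriv2 : ∀ y : ℝ, HasDerivAt d.U1 (d.U2 y) y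
  U_deriv3 : ∀ y : ℝ, HasDerivAt d.U2 (d.U3 y) y
  U3_cont : Continuous d.U3
  U1_pos : ∀ y : ℝ, 0 < d.U1 y
  U2_neg : ∀ y : ℝ, d.U2 y < 0
  wt_cont : ContinuousOn (fun p : ℝ × ℝ × ℝ => d.wt p.1 p.2.1 p.2.2)
    (Icc 0 d.T ×ˢ Icc d.K⁻¹ d.K ×ˢ Icc d.yl d.yu)
  wh_cont : ContinuousOn (fun p : ℝ × ℝ × ℝ => d.wh p.1 p.2.1 p.2.2)
    (Icc 0 d.T ×ˢ Icc d.K⁻¹ d.K ×ˢ Icc d.yl d.yu)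
  wt_deriv : ∀ t ∈ Ioo (0:ℝ) d.T, ∀ s ∈ Ioo d.K⁻¹ d.K, ∀ y ∈ Ioo d.yl d.yu,
    HasDerivAt (fun t' => d.wt t' s y) (d.wtT t s y) t ∧
    HasDerivAt (fun s' => d.wt t s' y) (d.wtS t s y) s ∧
    HasDerivAt (fun y' => d.wt t s y') (d.wtY t s y) y ∧
    HasDerivAt (fun s' => d.wtS t s' y) (d.wtSS t s y) s ∧
    HasDerivAt (fun y' => d.wtS t s y') (d.wtSY t s y) y ∧
    HasDerivAt (fun y' => d.wtY t s y') (d.wtYY t s y) y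
  wh_deriv : ∀ t ∈ Ioo (0:ℝ) d.T, ∀ s ∈ Ioo d.K⁻¹ d.K, ∀ y ∈ Ioo d.yl d.yu,
    HasDerivAt (fun t' => d.wh t' s y) (d.whT t s y) t ∧
    HasDerivAt (fun s' => d.wh t s' y) (d.whS t s y) s ∧
    HasDerivAt (fun y' => d.wh t s y') (d.whY t s y) y ∧
    HasDerivAt (fun s' => d.whS t s' y) (d.whSS t s y) s ∧
    HasDerivAt (fun y' => d.whS t s y') (d.whSY t s y) y ∧
    HasDerivAt (fun y' => d.whY t s y') (d.whYY t s y) y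
  wt_deriv_cont : ∀ g ∈ [d.wtT, d.wtS, d.wtY, d.wtSS, d.wtSY, d.wtYY],
    ContinuousOn (fun p : ℝ × ℝ × ℝ => g p.1 p.2.1 p.2.2)
      (Ioo 0 d.T ×ˢ Ioo d.K⁻¹ d.K ×ˢ Ioo d.yl d.yu)
  wh_deriv_cont : ∀ g ∈ [d.whT, d.whS, d.whY, d.whSS, d.whSY, d.whYY],
    ContinuousOn (fun p : ℝ × ℝ × ℝ => g p.1 p.2.1 p.2.2)
      (Ioo 0 d.T ×ˢ Ioo d.K⁻¹ d.K ×ˢ Ioo d.yl d.yu)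
  wt_bdd : ∀ g ∈ [d.wtT, d.wtS, d.wtY, d.wtSS, d.wtSY, d.wtYY],
    ∀ t ∈ Ioo (0:ℝ) d.T, ∀ s ∈ Ioo d.K⁻¹ d.K, ∀ y ∈ Ioo d.yl d.yu, |g t s y| ≤ d.K
  wh_bdd : ∀ g ∈ [d.whT, d.whS, d.whY, d.whSS, d.whSY, d.whYY],
    ∀ t ∈ Ioo (0:ℝ) d.T, ∀ s ∈ Ioo d.K⁻¹ d.K, ∀ y ∈ Ioo d.yl d.yu, |g t s y| ≤ d.K

/-- The PDEs (with source terms `g̃` and `ĝ`) and terminal/boundary conditions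
satisfied by the correction terms `w̃` and `ŵ`. -/
structure HedgeData.PDEAssumptions (d : HedgeData) : Prop where
  pde_wt : ∀ t ∈ Ioo (0:ℝ) d.T, ∀ s ∈ Ioo d.K⁻¹ d.K, ∀ y ∈ Ioo d.yl d.yu,
    d.wtT t s y + 1 / 2 * (d.sb t s) ^ 2 * s ^ 2 * d.wtSS t s y
      + (d.sb t s * s ^ 2 * d.Vss t s) ^ 2 / (2 * d.f2 t s y (d.sb t s)) = 0
  pde_wh : ∀ t ∈ Ioo (0:ℝ) d.T, ∀ s ∈ Ioo d.K⁻¹ d.K, ∀ y ∈ Ioo d.yl d.yu,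
    d.whT t s y + 1 / 2 * (d.sb t s) ^ 2 * s ^ 2 * d.whSS t s y
      + (1 / 6 * d.sigmaTilde t s y ^ 3 * d.f3 t s y (d.sb t s)
        - 1 / 2 * d.sigmaTilde t s y ^ 2 * s ^ 2 * d.Vss t s
        + d.sigmaTilde t s y * d.sb t s * s ^ 2
            * (d.Vss t s * d.wtY t s y - d.wtSS t s y)
        - d.U2 y / d.U1 y * (1 / 2 * (d.sb t s) ^ 2 * s ^ 2 * d.thetaTilde t s y ^ 2
            - d.sigmaTilde t s y ^ 2 * d.f2 t s y (d.sb t s) * d.wt t s y)) = 0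
  bc_T : ∀ s ∈ Ioo d.K⁻¹ d.K, ∀ y ∈ Ioo d.yl d.yu, d.wt d.T s y = 0 ∧ d.wh d.T s y = 0
  bc_S : ∀ t ∈ Ioo (0:ℝ) d.T, ∀ y ∈ Ioo d.yl d.yu,
    d.wt t d.K⁻¹ y = 0 ∧ d.wt t d.K y = 0 ∧ d.wh t d.K⁻¹ y = 0 ∧ d.wh t d.K y = 0

/-!
At the candidate volatility the HJBI equation holds up to a two-sided error of order `ψ³`. Since
`w^ψ_yy` is close to `U'' < 0`, the Hamiltonian is a concave quadratic in `ϑ - V̄_s`, whose maximum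
replaces the `ϑ`-dependent terms by `-(w^ψ_sy)² / w^ψ_yy = -U'' θ̃² ψ² + O(ψ³)`. The penalty has a
double zero at `σ̄`, so `f(σ^ψ) / ψ` is a polynomial in `ψ` up to `O(ψ³)`. After these two
expansions the terms of order `ψ` cancel by the equation for `w̃` and those of order `ψ²` by the
equation for `ŵ`.
-/

open Asymptotics Filter Topology

section BigO

variable {ι 𝕜 : Type*} [NormedField 𝕜] {l : Filter ι}

lemma isBigO_mul_of_isBigO_one {R : Type*} [SeminormedRing R] {f g : ι → R} {k : ι → 𝕜}
    (hf : f =O[l] fun _ ↦ (1 : 𝕜)) (hg : g =O[l] k) : (fun x ↦ f x * g x) =O[l] k := by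
  simpa only [one_mul] using hf.mul hg

lemma isBigO_pow_of_isBigO_one {R : Type*} [SeminormedRing R] {f : ι → R}
    (hf : f =O[l] fun _ ↦ (1 : 𝕜)) (n : ℕ) : (fun x ↦ f x ^ n) =O[l] fun _ ↦ (1 : 𝕜) := by
  simpa only [one_pow] using hf.pow n

lemma isEquivalent_of_sub_isBigO {E : Type*} [NormedAddCommGroup E] {f g : ι → E} {ψ : ι → 𝕜}
    (hψ : Tendsto ψ l (𝓝 0)) (hg : (fun _ ↦ (1 : 𝕜)) =O[l] g)
    (hfg : (fun x ↦ f x - g x) =O[l] ψ) : f ~[l] g :=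
  (hfg.trans_isLittleO ((isLittleO_one_iff 𝕜).2 hψ)).trans_isBigO hg

lemma isBigO_sq_div_sub {ψ a a₀ b b₀ : ι → 𝕜} (hψ : Tendsto ψ l (𝓝 0))
    (ha₀ : (fun _ ↦ (1 : 𝕜)) =O[l] a₀) (hb₀ : b₀ =O[l] fun _ ↦ (1 : 𝕜))
    (ha : (fun x ↦ a x - a₀ x) =O[l] ψ)
    (hb : (fun x ↦ b x - b₀ x * ψ x) =O[l] fun x ↦ ψ x ^ 2) :
    (fun x ↦ b x ^ 2 / a x - b₀ x ^ 2 / a₀ x * ψ x ^ 2) =O[l] fun x ↦ ψ x ^ 3 := by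
  have one_isBigO_a : (fun _ ↦ (1 : 𝕜)) =O[l] a :=
    ha₀.trans (isEquivalent_of_sub_isBigO hψ ha₀ ha).isBigO_symm
  have inv_isBigO_one : ∀ {c : ι → 𝕜}, (fun _ ↦ (1 : 𝕜)) =O[l] c →
      (fun x ↦ (c x)⁻¹) =O[l] fun _ ↦ (1 : 𝕜) := fun hc ↦ by
    simpa only [inv_one] using hc.inv_rev (.of_forall fun _ h ↦ absurd h one_ne_zero)
  have hψ₁ : ψ =O[l] fun _ ↦ (1 : 𝕜) := hψ.isBigO_one 𝕜
  have hb₀ψ : (fun x ↦ b₀ x * ψ x) =O[l] ψ := isBigO_mul_of_isBigO_one hb₀ (isBigO_refl ψ l)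
  have hψ₂ : (fun x ↦ ψ x ^ 2) =O[l] ψ := by
    simpa only [sq] using isBigO_mul_of_isBigO_one hψ₁ (isBigO_refl ψ l)
  have hsum : (fun x ↦ b x + b₀ x * ψ x) =O[l] ψ :=
    ((hb.trans hψ₂).add (hb₀ψ.const_mul_left 2)).congr_left fun x ↦ by ring
  have hnum : (fun x ↦ b x ^ 2 - b₀ x ^ 2 * (a₀ x)⁻¹ * a x * ψ x ^ 2) =O[l]
      fun x ↦ ψ x ^ 2 * ψ x := by
    refine ((hb.mul hsum).sub (((isBigO_refl (fun x ↦ ψ x ^ 2) l).mul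
      (isBigO_mul_of_isBigO_one (isBigO_mul_of_isBigO_one (isBigO_pow_of_isBigO_one hb₀ 2)
        (inv_isBigO_one ha₀)) ha)))).congr' ?_ .rfl
    filter_upwards [ha₀.eq_zero_imp] with x ha₀x
    have : a₀ x ≠ 0 := fun h ↦ one_ne_zero (ha₀x h)
    field_simp
    ring
  refine (isBigO_mul_of_isBigO_one (inv_isBigO_one one_isBigO_a) hnum).congr' ?_
    (.of_forall fun x ↦ (pow_succ _ 2).symm)
  filter_upwards [one_isBigO_a.eq_zero_imp] with x hax
  have : a x ≠ 0 := fun h ↦ one_ne_zero (hax h)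
  field_simp

end BigO

lemma abs_sub_taylor_le {f : ℝ → ℝ} {n : ℕ} (hf : ContDiff ℝ (n + 1) f) {a x C : ℝ}
    (hC : ∀ z ∈ uIcc a x, |iteratedDeriv (n + 1) f z| ≤ C) :
    |f x - ∑ k ∈ Finset.range (n + 1), (k.factorial : ℝ)⁻¹ * (x - a) ^ k * iteratedDeriv k f a|
      ≤ C * |x - a| ^ (n + 1) / (n + 1).factorial := by
  rcases eq_or_ne a x with rfl | hax
  · simp [Finset.sum_range_succ']
  obtain ⟨z, hz, hrem⟩ := taylor_mean_remainder_lagrange_iteratedDeriv hax hf.contDiffOn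
  have hderiv : ∀ k ∈ Finset.range (n + 1),
      iteratedDerivWithin k f (uIcc a x) a = iteratedDeriv k f a := fun k hk ↦
    iteratedDerivWithin_eq_iteratedDeriv (uniqueDiffOn_uIcc hax)
      (hf.contDiffAt.of_le (by exact_mod_cast (Finset.mem_range.1 hk).le)) left_mem_uIcc
  rw [taylor_within_apply, Finset.sum_congr rfl fun k hk ↦ by rw [hderiv k hk, smul_eq_mul]]
    at hrem
  rw [hrem, abs_div, abs_mul, abs_pow, Nat.abs_cast]
  gcongr
  exact hC z (uIoo_subset_uIcc_self hz)

lemma isGreatest_range_quadratic {a : ℝ} (ha : a < 0) (b : ℝ) :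
    IsGreatest (range fun x : ℝ ↦ 2 * x * b + x ^ 2 * a) (-(b ^ 2 / a)) := by
  refine ⟨⟨-b / a, by field_simp; ring⟩, ?_⟩
  rintro _ ⟨x, rfl⟩
  have ha' := ha.ne
  calc 2 * x * b + x ^ 2 * a = -(b ^ 2 / a) + a * (x + b / a) ^ 2 := by field_simp; ring
    _ ≤ -(b ^ 2 / a) :=
      add_le_of_nonpos_right (mul_nonpos_of_nonpos_of_nonneg ha.le (sq_nonneg _))

namespace HedgeData

/-- The domain `D = (0,T) × (1/K,K) × (y_l,y_u)`. -/
def domain (d : HedgeData) : Set (ℝ × ℝ × ℝ) :=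
  Ioo 0 d.T ×ˢ Ioo d.K⁻¹ d.K ×ˢ Ioo d.yl d.yu

/-- The limit `ψ → 0+`, uniformly over `D`: a property of `(ψ, t, s, y)` holds eventually along
this filter iff it holds on `(0,ψ₀) × D` for some `ψ₀ > 0`. -/
def smallAversion (d : HedgeData) : Filter (ℝ × ℝ × ℝ × ℝ) :=
  𝓝[>] 0 ×ˢ 𝓟 d.domain

/-- The source term `g̃` of the equation for `w̃`. -/
noncomputable def gTilde (d : HedgeData) (t s y : ℝ) : ℝ :=
  (d.sb t s * s ^ 2 * d.Vss t s) ^ 2 / (2 * d.f2 t s y (d.sb t s))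

/-- The source term `ĝ` of the equation for `ŵ`. -/
noncomputable def gHat (d : HedgeData) (t s y : ℝ) : ℝ :=
  1 / 6 * d.sigmaTilde t s y ^ 3 * d.f3 t s y (d.sb t s)
    - 1 / 2 * d.sigmaTilde t s y ^ 2 * s ^ 2 * d.Vss t s
    + d.sigmaTilde t s y * d.sb t s * s ^ 2 * (d.Vss t s * d.wtY t s y - d.wtSS t s y)
    - d.U2 y / d.U1 y * (1 / 2 * d.sb t s ^ 2 * s ^ 2 * d.thetaTilde t s y ^ 2
        - d.sigmaTilde t s y ^ 2 * d.f2 t s y (d.sb t s) * d.wt t s y)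

/-- The equations for `w̃` and `ŵ` in the interior of `D`, without the terminal and boundary
conditions. -/
structure CorrectorPDEs (d : HedgeData) : Prop where
  wt_eq : ∀ {t s y}, (t, s, y) ∈ d.domain →
    d.wtT t s y + 1 / 2 * d.sb t s ^ 2 * s ^ 2 * d.wtSS t s y + d.gTilde t s y = 0
  wh_eq : ∀ {t s y}, (t, s, y) ∈ d.domain →
    d.whT t s y + 1 / 2 * d.sb t s ^ 2 * s ^ 2 * d.whSS t s y + d.gHat t s y = 0

/-- The maximum of the Hamiltonian `H^ψ(t,s,y;ϑ,ς)` over the strategies `ϑ` when `w^ψ_yy < 0`. -/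
noncomputable def maxHam (d : HedgeData) (ψ t s y ς : ℝ) : ℝ :=
  1 / ψ * d.U1 y * d.f t s y ς
    + 1 / 2 * s ^ 2 * d.Vss t s * (d.sb t s ^ 2 - ς ^ 2) * d.wPsiY ψ t s y
    + 1 / 2 * ς ^ 2 * s ^ 2 * (d.wPsiSS ψ t s y - d.wPsiSY ψ t s y ^ 2 / d.wPsiYY ψ t s y)

/-- The third-order Taylor polynomial of `f(t,s,y;·)` at `σ̄(t,s)`, evaluated at `σ^ψ(t,s,y)`. The
terms of order zero and one are omitted since `f` and `f'` vanish at `σ̄`. -/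
noncomputable def penaltyTaylor (d : HedgeData) (ψ t s y : ℝ) : ℝ :=
  1 / 2 * d.f2 t s y (d.sb t s) * (d.sigmaTilde t s y * ψ) ^ 2
    + 1 / 6 * d.f3 t s y (d.sb t s) * (d.sigmaTilde t s y * ψ) ^ 3

/-- The coefficient of `ψ³` in `w^ψ_t + sup_ϑ H^ψ(σ^ψ)` once the penalty and `(w^ψ_sy)² / w^ψ_yy`
are replaced by their leading-order expansions. It still depends on `ψ`, through `σ^ψ`. -/
noncomputable def cubicCoeff (d : HedgeData) (ψ t s y : ℝ) : ℝ :=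
  1 / 2 * d.sigmaTilde t s y *
    (s ^ 2 * d.Vss t s * (d.sigmaTilde t s y * (d.U2 y * d.wt t s y + d.U1 y * d.wtY t s y)
        - (d.sb t s + d.sigmaPsi ψ t s y) * (d.U2 y * d.wh t s y + d.U1 y * d.whY t s y))
      + s ^ 2 * ((d.sb t s + d.sigmaPsi ψ t s y)
          * (d.U1 y * d.whSS t s y - d.U2 y * d.thetaTilde t s y ^ 2)
        - d.sigmaTilde t s y * (d.U1 y * d.wtSS t s y)))

variable {d : HedgeData}

lemma isGreatest_ham {ψ t s y : ℝ} (hyy : d.wPsiYY ψ t s y < 0) (ς : ℝ) :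
    IsGreatest (range fun ϑ ↦ d.Ham ψ t s y ϑ ς) (d.maxHam ψ t s y ς) := by
  obtain ⟨⟨δ, hδ⟩, hmax⟩ := isGreatest_range_quadratic hyy (d.wPsiSY ψ t s y)
  simp only at hδ
  refine ⟨⟨d.Vs t s + δ, ?_⟩, ?_⟩
  · simp only [Ham, maxHam, add_sub_cancel_left]
    rw [add_assoc (d.wPsiSS ψ t s y), hδ, ← sub_eq_add_neg]
  · rintro _ ⟨ϑ, rfl⟩
    simp only [Ham, maxHam]
    rw [add_assoc (d.wPsiSS ψ t s y), sub_eq_add_neg (d.wPsiSS ψ t s y)]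
    gcongr
    exact hmax ⟨ϑ - d.Vs t s, rfl⟩

lemma CorrectorPDEs.wPsiT_add_maxHam_eq (hpde : d.CorrectorPDEs) {ψ t s y : ℝ}
    (hx : (t, s, y) ∈ d.domain) (hU1 : d.U1 y ≠ 0) (hf2 : d.f2 t s y (d.sb t s) ≠ 0)
    (hψ : ψ ≠ 0) :
    d.wPsiT ψ t s y + d.maxHam ψ t s y (d.sigmaPsi ψ t s y) =
      d.U1 y * (ψ⁻¹ * (d.f t s y (d.sigmaPsi ψ t s y) - d.penaltyTaylor ψ t s y))
      - 1 / 2 * d.sigmaPsi ψ t s y ^ 2 * s ^ 2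
        * (d.wPsiSY ψ t s y ^ 2 / d.wPsiYY ψ t s y
          - d.U2 y * d.thetaTilde t s y ^ 2 * ψ ^ 2)
      + d.cubicCoeff ψ t s y * ψ ^ 3 := by
  have hwt := hpde.wt_eq hx
  have hwh := hpde.wh_eq hx
  have hσ : d.f2 t s y (d.sb t s) * d.sigmaTilde t s y = d.sb t s * s ^ 2 * d.Vss t s :=
    mul_div_cancel₀ _ hf2
  have hgt : d.gTilde t s y = 1 / 2 * d.f2 t s y (d.sb t s) * d.sigmaTilde t s y ^ 2 := by
    rw [gTilde, ← hσ]
    field_simp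
  have hpenalty : ψ⁻¹ * d.penaltyTaylor ψ t s y
      = 1 / 2 * d.f2 t s y (d.sb t s) * d.sigmaTilde t s y ^ 2 * ψ
        + 1 / 6 * d.f3 t s y (d.sb t s) * d.sigmaTilde t s y ^ 3 * ψ ^ 2 := by
    rw [penaltyTaylor]
    field_simp
  have hratio : d.U1 y * (d.U2 y / d.U1 y) = d.U2 y := mul_div_cancel₀ _ hU1
  rw [hgt] at hwt
  rw [gHat] at hwh
  simp only [maxHam, wPsiT, wPsiY, wPsiSS, cubicCoeff, one_div, sigmaPsi]
  linear_combination (-(d.U1 y * ψ)) * hwt + (d.U1 y * ψ ^ 2) * hwh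
    + (d.U1 y * ψ * d.sigmaTilde t s y
      - ψ ^ 2 * d.sigmaTilde t s y * (d.U2 y * d.wt t s y)) * hσ + d.U1 y * hpenalty
    + ψ ^ 2 * (1 / 2 * d.sb t s ^ 2 * s ^ 2 * d.thetaTilde t s y ^ 2
        - d.sigmaTilde t s y ^ 2 * d.f2 t s y (d.sb t s) * d.wt t s y) * hratio

lemma eventually_smallAversion_iff {p : ℝ × ℝ × ℝ × ℝ → Prop} :
    (∀ᶠ x in d.smallAversion, p x) ↔
      ∃ ψ₀ > 0, ∀ ψ ∈ Ioo 0 ψ₀, ∀ x ∈ d.domain, p (ψ, x) := by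
  rw [smallAversion, eventually_prod_principal_iff]
  exact mem_nhdsGT_iff_exists_Ioo_subset

lemma eventually_mem_smallAversion :
    ∀ᶠ x in d.smallAversion, 0 < x.1 ∧ x.2 ∈ d.domain :=
  eventually_smallAversion_iff.2 ⟨1, one_pos, fun _ hψ _ hx ↦ ⟨hψ.1, hx⟩⟩

lemma tendsto_fst_smallAversion : Tendsto (fun x ↦ x.1) d.smallAversion (𝓝 0) :=
  tendsto_fst.mono_right nhdsWithin_le_nhds

lemma isBigO_one_of_forall_domain {g : ℝ → ℝ → ℝ → ℝ} {C : ℝ}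
    (hg : ∀ t ∈ Ioo 0 d.T, ∀ s ∈ Ioo d.K⁻¹ d.K, ∀ y ∈ Ioo d.yl d.yu, |g t s y| ≤ C) :
    (fun (_, t, s, y) ↦ g t s y) =O[d.smallAversion] fun _ ↦ (1 : ℝ) := by
  refine .of_bound C ?_
  filter_upwards [eventually_mem_smallAversion] with ⟨_, t, s, y⟩ ⟨_, ht, hs, hy⟩
  simpa using hg t ht s hs y hy

lemma isBigO_one_of_continuousOn {g : ℝ → ℝ → ℝ → ℝ}
    (hg : ContinuousOn (fun p : ℝ × ℝ × ℝ ↦ g p.1 p.2.1 p.2.2)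
      (Icc 0 d.T ×ˢ Icc d.K⁻¹ d.K ×ˢ Icc d.yl d.yu)) :
    (fun (_, t, s, y) ↦ g t s y) =O[d.smallAversion] fun _ ↦ (1 : ℝ) := by
  obtain ⟨C, hC⟩ :=
    (isCompact_Icc.prod (isCompact_Icc.prod isCompact_Icc)).exists_bound_of_continuousOn hg
  exact isBigO_one_of_forall_domain fun t ht s hs y hy ↦ hC (t, s, y)
    ⟨Ioo_subset_Icc_self ht, Ioo_subset_Icc_self hs, Ioo_subset_Icc_self hy⟩

lemma isBigO_one_of_continuous {g : ℝ → ℝ} (hg : Continuous g) :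
    (fun (_, _, _, y) ↦ g y) =O[d.smallAversion] fun _ ↦ (1 : ℝ) :=
  isBigO_one_of_continuousOn (g := fun _ _ y ↦ g y) (hg.comp continuous_snd.snd).continuousOn

lemma isBigO_fst_one : (fun (ψ, _, _, _) ↦ ψ) =O[d.smallAversion] fun _ ↦ (1 : ℝ) :=
  tendsto_fst_smallAversion.isBigO_one ℝ

lemma isBigO_s_sq :
    (fun (_, _, s, _) ↦ s ^ 2) =O[d.smallAversion] fun _ ↦ (1 : ℝ) :=
  isBigO_one_of_continuousOn (g := fun _ s _ ↦ s ^ 2) (by fun_prop)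

lemma PDEAssumptions.correctorPDEs (hpde : d.PDEAssumptions) : d.CorrectorPDEs where
  wt_eq hx := hpde.pde_wt _ hx.1 _ hx.2.1 _ hx.2.2
  wh_eq hx := hpde.pde_wh _ hx.1 _ hx.2.1 _ hx.2.2

namespace Assumptions

lemma K_pos (hd : d.Assumptions) : 0 < d.K := one_pos.trans hd.hK

lemma sb_mem_Icc (hd : d.Assumptions) {t s y : ℝ} (hx : (t, s, y) ∈ d.domain) :
    d.sb t s ∈ Icc 0 d.K :=
  hd.sb_mem t (Ioo_subset_Icc_self hx.1) s (Ioo_subset_Icc_self hx.2.1)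

lemma inv_K_le_f2 (hd : d.Assumptions) {t s y : ℝ} (hx : (t, s, y) ∈ d.domain) :
    d.K⁻¹ ≤ d.f2 t s y (d.sb t s) := by
  simpa only [one_div] using (hd.f2_bdd t hx.1 s hx.2.1 y hx.2.2 _ (hd.sb_mem_Icc hx)).1

lemma f2_pos (hd : d.Assumptions) {t s y : ℝ} (hx : (t, s, y) ∈ d.domain) :
    0 < d.f2 t s y (d.sb t s) :=
  (inv_pos.2 hd.K_pos).trans_le (hd.inv_K_le_f2 hx)

lemma continuous_U1 (hd : d.Assumptions) : Continuous d.U1 :=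
  continuous_iff_continuousAt.2 fun y ↦ (hd.U_deriv2 y).continuousAt

lemma continuous_U2 (hd : d.Assumptions) : Continuous d.U2 :=
  continuous_iff_continuousAt.2 fun y ↦ (hd.U_deriv3 y).continuousAt

lemma isBigO_U1 (hd : d.Assumptions) :
    (fun (_, _, _, y) ↦ d.U1 y) =O[d.smallAversion] fun _ ↦ (1 : ℝ) :=
  isBigO_one_of_continuous hd.continuous_U1

lemma isBigO_U2 (hd : d.Assumptions) :
    (fun (_, _, _, y) ↦ d.U2 y) =O[d.smallAversion] fun _ ↦ (1 : ℝ) :=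
  isBigO_one_of_continuous hd.continuous_U2

lemma one_isBigO_U2 (hd : d.Assumptions) :
    (fun _ ↦ (1 : ℝ)) =O[d.smallAversion] fun (_, _, _, y) ↦ d.U2 y := by
  have hinv : (fun (_, _, _, y) ↦ (d.U2 y)⁻¹) =O[d.smallAversion] fun _ ↦ (1 : ℝ) :=
    isBigO_one_of_continuous (hd.continuous_U2.inv₀ fun y ↦ (hd.U2_neg y).ne)
  simpa only [inv_one, inv_inv] using hinv.inv_rev
    (.of_forall fun (_, _, _, y) h ↦ absurd h (inv_ne_zero (hd.U2_neg y).ne))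

lemma isBigO_wt (hd : d.Assumptions) :
    (fun (_, t, s, y) ↦ d.wt t s y) =O[d.smallAversion] fun _ ↦ (1 : ℝ) :=
  isBigO_one_of_continuousOn hd.wt_cont

lemma isBigO_wh (hd : d.Assumptions) :
    (fun (_, t, s, y) ↦ d.wh t s y) =O[d.smallAversion] fun _ ↦ (1 : ℝ) :=
  isBigO_one_of_continuousOn hd.wh_cont

lemma isBigO_wt_partial (hd : d.Assumptions) {g : ℝ → ℝ → ℝ → ℝ}
    (hg : g ∈ [d.wtT, d.wtS, d.wtY, d.wtSS, d.wtSY, d.wtYY]) :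
    (fun (_, t, s, y) ↦ g t s y) =O[d.smallAversion] fun _ ↦ (1 : ℝ) :=
  isBigO_one_of_forall_domain (hd.wt_bdd g hg)

lemma isBigO_wh_partial (hd : d.Assumptions) {g : ℝ → ℝ → ℝ → ℝ}
    (hg : g ∈ [d.whT, d.whS, d.whY, d.whSS, d.whSY, d.whYY]) :
    (fun (_, t, s, y) ↦ g t s y) =O[d.smallAversion] fun _ ↦ (1 : ℝ) :=
  isBigO_one_of_forall_domain (hd.wh_bdd g hg)

lemma isBigO_sq_mul_Vss (hd : d.Assumptions) :
    (fun (_, t, s, _) ↦ s ^ 2 * d.Vss t s) =O[d.smallAversion] fun _ ↦ (1 : ℝ) :=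
  isBigO_one_of_forall_domain fun t ht s hs _ _ ↦ hd.Vss_bdd t ht s hs

lemma isBigO_sb (hd : d.Assumptions) :
    (fun (_, t, s, _) ↦ d.sb t s) =O[d.smallAversion] fun _ ↦ (1 : ℝ) :=
  isBigO_one_of_forall_domain fun t ht s hs y hy ↦ by
    have hσ := hd.sb_mem_Icc (y := y) ⟨ht, hs, hy⟩
    exact (abs_of_nonneg hσ.1).trans_le hσ.2

lemma isBigO_sigmaTilde (hd : d.Assumptions) :
    (fun (_, t, s, y) ↦ d.sigmaTilde t s y) =O[d.smallAversion] fun _ ↦ (1 : ℝ) := by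
  have hinv : (fun (_, t, s, y) ↦ (d.f2 t s y (d.sb t s))⁻¹) =O[d.smallAversion]
      fun _ ↦ (1 : ℝ) :=
    isBigO_one_of_forall_domain fun t ht s hs y hy ↦ by
      rw [abs_of_pos (inv_pos.2 (hd.f2_pos ⟨ht, hs, hy⟩))]
      exact inv_le_of_inv_le₀ hd.K_pos (hd.inv_K_le_f2 ⟨ht, hs, hy⟩)
  refine (isBigO_mul_of_isBigO_one (isBigO_mul_of_isBigO_one hd.isBigO_sb hd.isBigO_sq_mul_Vss)
    hinv).congr_left fun (_, t, s, y) ↦ ?_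
  simp only [sigmaTilde, div_eq_mul_inv, mul_assoc]

lemma isBigO_thetaTilde (hd : d.Assumptions) :
    (fun (_, t, s, y) ↦ d.thetaTilde t s y) =O[d.smallAversion] fun _ ↦ (1 : ℝ) := by
  have hratio : (fun (_, _, _, y) ↦ d.U1 y / d.U2 y) =O[d.smallAversion] fun _ ↦ (1 : ℝ) :=
    isBigO_one_of_continuous (hd.continuous_U1.div hd.continuous_U2 fun y ↦ (hd.U2_neg y).ne)
  exact (hd.isBigO_wt_partial (by simp)).add
    (isBigO_mul_of_isBigO_one hratio (hd.isBigO_wt_partial (by simp)))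

lemma isBigO_sigmaPsi (hd : d.Assumptions) :
    (fun (ψ, t, s, y) ↦ d.sigmaPsi ψ t s y) =O[d.smallAversion] fun _ ↦ (1 : ℝ) :=
  hd.isBigO_sb.add (isBigO_mul_of_isBigO_one hd.isBigO_sigmaTilde isBigO_fst_one)

lemma isBigO_cubicCoeff (hd : d.Assumptions) :
    (fun (ψ, t, s, y) ↦ d.cubicCoeff ψ t s y) =O[d.smallAversion] fun _ ↦ (1 : ℝ) := by
  have hσ := hd.isBigO_sb.add hd.isBigO_sigmaPsi
  have hyt := (isBigO_mul_of_isBigO_one hd.isBigO_U2 hd.isBigO_wt).add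
    (isBigO_mul_of_isBigO_one hd.isBigO_U1 (hd.isBigO_wt_partial (g := d.wtY) (by simp)))
  have hyh := (isBigO_mul_of_isBigO_one hd.isBigO_U2 hd.isBigO_wh).add
    (isBigO_mul_of_isBigO_one hd.isBigO_U1 (hd.isBigO_wh_partial (g := d.whY) (by simp)))
  have hsst := isBigO_mul_of_isBigO_one hd.isBigO_U1
    (hd.isBigO_wt_partial (g := d.wtSS) (by simp))
  have hssh := (isBigO_mul_of_isBigO_one hd.isBigO_U1
    (hd.isBigO_wh_partial (g := d.whSS) (by simp))).sub
    (isBigO_mul_of_isBigO_one hd.isBigO_U2 (isBigO_pow_of_isBigO_one hd.isBigO_thetaTilde 2))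
  exact isBigO_mul_of_isBigO_one (hd.isBigO_sigmaTilde.const_mul_left (1 / 2))
    ((isBigO_mul_of_isBigO_one hd.isBigO_sq_mul_Vss
      ((isBigO_mul_of_isBigO_one hd.isBigO_sigmaTilde hyt).sub
        (isBigO_mul_of_isBigO_one hσ hyh))).add
    (isBigO_mul_of_isBigO_one isBigO_s_sq
      ((isBigO_mul_of_isBigO_one hσ hssh).sub
        (isBigO_mul_of_isBigO_one hd.isBigO_sigmaTilde hsst))))

lemma isBigO_wPsiYY_sub (hd : d.Assumptions) :
    (fun (ψ, t, s, y) ↦ d.wPsiYY ψ t s y - d.U2 y) =O[d.smallAversion]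
      fun (ψ, _, _, _) ↦ ψ := by
  have hU3 : (fun (_, _, _, y) ↦ d.U3 y) =O[d.smallAversion] fun _ ↦ (1 : ℝ) :=
    isBigO_one_of_continuous hd.U3_cont
  have hyyt := ((isBigO_mul_of_isBigO_one hU3 hd.isBigO_wt).add
    (isBigO_mul_of_isBigO_one (hd.isBigO_U2.const_mul_left 2)
      (hd.isBigO_wt_partial (g := d.wtY) (by simp)))).add
    (isBigO_mul_of_isBigO_one hd.isBigO_U1 (hd.isBigO_wt_partial (g := d.wtYY) (by simp)))
  have hyyh := ((isBigO_mul_of_isBigO_one hU3 hd.isBigO_wh).add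
    (isBigO_mul_of_isBigO_one (hd.isBigO_U2.const_mul_left 2)
      (hd.isBigO_wh_partial (g := d.whY) (by simp)))).add
    (isBigO_mul_of_isBigO_one hd.isBigO_U1 (hd.isBigO_wh_partial (g := d.whYY) (by simp)))
  refine (isBigO_mul_of_isBigO_one ((isBigO_mul_of_isBigO_one hyyh isBigO_fst_one).sub hyyt)
    (isBigO_refl (fun (ψ, _, _, _) ↦ ψ) _)).congr_left fun (ψ, t, s, y) ↦ ?_
  simp only [wPsiYY]
  ring

lemma isBigO_wPsiSY_sub (hd : d.Assumptions) :
    (fun (ψ, t, s, y) ↦ d.wPsiSY ψ t s y - -(d.U2 y * d.thetaTilde t s y) * ψ)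
      =O[d.smallAversion] fun (ψ, _, _, _) ↦ ψ ^ 2 := by
  have hsyh := (isBigO_mul_of_isBigO_one hd.isBigO_U2
    (hd.isBigO_wh_partial (g := d.whS) (by simp))).add
    (isBigO_mul_of_isBigO_one hd.isBigO_U1 (hd.isBigO_wh_partial (g := d.whSY) (by simp)))
  refine (isBigO_mul_of_isBigO_one hsyh
    (isBigO_refl (fun (ψ, _, _, _) ↦ ψ ^ 2) _)).congr_left fun (ψ, t, s, y) ↦ ?_
  have hU2 := (hd.U2_neg y).ne
  simp only [wPsiSY, thetaTilde]
  field_simp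
  ring

lemma eventually_wPsiYY_neg (hd : d.Assumptions) :
    ∀ᶠ x in d.smallAversion, d.wPsiYY x.1 x.2.1 x.2.2.1 x.2.2.2 < 0 :=
  (isEquivalent_of_sub_isBigO tendsto_fst_smallAversion hd.one_isBigO_U2
    hd.isBigO_wPsiYY_sub).eventually_neg (.of_forall fun (_, _, _, y) ↦ hd.U2_neg y)

lemma isBigO_wPsiSY_sq_div_wPsiYY_sub (hd : d.Assumptions) :
    (fun (ψ, t, s, y) ↦ d.wPsiSY ψ t s y ^ 2 / d.wPsiYY ψ t s y
      - d.U2 y * d.thetaTilde t s y ^ 2 * ψ ^ 2) =O[d.smallAversion]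
        fun (ψ, _, _, _) ↦ ψ ^ 3 := by
  refine (isBigO_sq_div_sub tendsto_fst_smallAversion hd.one_isBigO_U2
    (isBigO_mul_of_isBigO_one hd.isBigO_U2 hd.isBigO_thetaTilde).neg_left
    hd.isBigO_wPsiYY_sub hd.isBigO_wPsiSY_sub).congr_left fun (_, _, _, y) ↦ ?_
  field_simp

lemma eventually_sigmaPsi_mem_Icc (hd : d.Assumptions) :
    ∀ᶠ x in d.smallAversion, d.sigmaPsi x.1 x.2.1 x.2.2.1 x.2.2.2 ∈ Icc 0 d.K := by
  have htend : Tendsto (fun (ψ, t, s, y) ↦ d.sigmaTilde t s y * ψ) d.smallAversion (𝓝 0) :=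
    (isBigO_mul_of_isBigO_one hd.isBigO_sigmaTilde (isBigO_refl _ _)).trans_tendsto
      tendsto_fst_smallAversion
  filter_upwards [eventually_mem_smallAversion, htend.abs.eventually_le_const
    (by simpa using hd.heps)] with ⟨ψ, t, s, y⟩ ⟨_, ht, hs, _⟩ hε
  have hlb := hd.sb_lb t (Ioo_subset_Icc_self ht) s hs
  have hub := hd.sb_ub t (Ioo_subset_Icc_self ht) s hs
  obtain ⟨hε₁, hε₂⟩ := abs_le.1 hε
  constructor <;> rw [sigmaPsi] <;> linarith

lemma deriv_f (hd : d.Assumptions) (t s y : ℝ) : deriv (d.f t s y) = d.f1 t s y :=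
  funext fun ς ↦ (hd.f_deriv1 t s y ς).deriv

lemma deriv_f1 (hd : d.Assumptions) (t s y : ℝ) : deriv (d.f1 t s y) = d.f2 t s y :=
  funext fun ς ↦ (hd.f_deriv2 t s y ς).deriv

lemma deriv_f2 (hd : d.Assumptions) (t s y : ℝ) : deriv (d.f2 t s y) = d.f3 t s y :=
  funext fun ς ↦ (hd.f_deriv3 t s y ς).deriv

lemma deriv_f3 (hd : d.Assumptions) (t s y : ℝ) : deriv (d.f3 t s y) = d.f4 t s y :=
  funext fun ς ↦ (hd.f_deriv4 t s y ς).deriv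

lemma contDiff_f (hd : d.Assumptions) (t s y : ℝ) : ContDiff ℝ 4 (d.f t s y) := by
  have h3 : ContDiff ℝ 1 (d.f3 t s y) := contDiff_one_iff_deriv.2
    ⟨fun ς ↦ (hd.f_deriv4 t s y ς).differentiableAt, by
      simpa only [hd.deriv_f3] using hd.f4_cont t s y⟩
  have h2 : ContDiff ℝ (1 + 1) (d.f2 t s y) := contDiff_succ_iff_deriv.2
    ⟨fun ς ↦ (hd.f_deriv3 t s y ς).differentiableAt, by simp, by rwa [hd.deriv_f2]⟩
  have h1 : ContDiff ℝ (1 + 1 + 1) (d.f1 t s y) := contDiff_succ_iff_deriv.2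
    ⟨fun ς ↦ (hd.f_deriv2 t s y ς).differentiableAt, by simp, by rwa [hd.deriv_f1]⟩
  have h0 : ContDiff ℝ (1 + 1 + 1 + 1) (d.f t s y) := contDiff_succ_iff_deriv.2
    ⟨fun ς ↦ (hd.f_deriv1 t s y ς).differentiableAt, by simp, by rwa [hd.deriv_f]⟩
  convert h0
  norm_num

lemma abs_penalty_sub_penaltyTaylor_le (hd : d.Assumptions) {ψ t s y : ℝ}
    (hx : (t, s, y) ∈ d.domain) (hς : d.sigmaPsi ψ t s y ∈ Icc 0 d.K) :
    |d.f t s y (d.sigmaPsi ψ t s y) - d.penaltyTaylor ψ t s y|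
      ≤ d.K * |d.sigmaTilde t s y * ψ| ^ 4 / Nat.factorial 4 := by
  have hf4 : ∀ z ∈ uIcc (d.sb t s) (d.sigmaPsi ψ t s y),
      |iteratedDeriv (3 + 1) (d.f t s y) z| ≤ d.K := fun z hz ↦ by
    simp only [iteratedDeriv_succ', iteratedDeriv_zero, hd.deriv_f, hd.deriv_f1, hd.deriv_f2,
      hd.deriv_f3]
    exact (hd.f34_bdd t hx.1 s hx.2.1 y hx.2.2 z (uIcc_subset_Icc (hd.sb_mem_Icc hx) hς hz)).2
  obtain ⟨hf, hf1⟩ := hd.f_min t hx.1 s hx.2.1 y hx.2.2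
  have hσ : d.sigmaPsi ψ t s y - d.sb t s = d.sigmaTilde t s y * ψ := add_sub_cancel_left _ _
  convert abs_sub_taylor_le (hd.contDiff_f t s y) hf4 using 3
  · simp only [Finset.sum_range_succ, Finset.sum_range_zero, iteratedDeriv_succ',
      iteratedDeriv_zero, hd.deriv_f, hd.deriv_f1, hd.deriv_f2, hf, hf1, hσ, penaltyTaylor,
      Nat.factorial]
    push_cast
    ring
  · rw [hσ]

lemma isBigO_penalty_sub_penaltyTaylor (hd : d.Assumptions) :
    (fun (ψ, t, s, y) ↦ d.f t s y (d.sigmaPsi ψ t s y) - d.penaltyTaylor ψ t s y)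
      =O[d.smallAversion] fun (ψ, _, _, _) ↦ ψ ^ 4 := by
  have hσψ : (fun (ψ, t, s, y) ↦ d.sigmaTilde t s y * ψ) =O[d.smallAversion]
      fun (ψ, _, _, _) ↦ ψ := isBigO_mul_of_isBigO_one hd.isBigO_sigmaTilde (isBigO_refl _ _)
  refine IsBigO.trans (.of_bound (d.K / Nat.factorial 4) ?_) (hσψ.pow 4)
  filter_upwards [eventually_mem_smallAversion, hd.eventually_sigmaPsi_mem_Icc]
    with ⟨ψ, t, s, y⟩ ⟨_, hx⟩ hς
  rw [norm_pow, div_mul_eq_mul_div]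
  exact hd.abs_penalty_sub_penaltyTaylor_le hx hς

lemma isBigO_wPsiT_add_maxHam (hd : d.Assumptions) (hpde : d.CorrectorPDEs) :
    (fun (ψ, t, s, y) ↦ d.wPsiT ψ t s y + d.maxHam ψ t s y (d.sigmaPsi ψ t s y))
      =O[d.smallAversion] fun (ψ, _, _, _) ↦ ψ ^ 3 := by
  have hpenalty : (fun (ψ, t, s, y) ↦
      ψ⁻¹ * (d.f t s y (d.sigmaPsi ψ t s y) - d.penaltyTaylor ψ t s y))
        =O[d.smallAversion] fun (ψ, _, _, _) ↦ ψ ^ 3 := by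
    refine ((isBigO_refl (fun x ↦ x.1⁻¹) d.smallAversion).mul
      hd.isBigO_penalty_sub_penaltyTaylor).congr' .rfl ?_
    filter_upwards [eventually_mem_smallAversion] with ⟨ψ, _, _, _⟩ ⟨hψ, _⟩
    rw [pow_succ' ψ 3, inv_mul_cancel_left₀ hψ.ne']
  have hdiffusion := isBigO_mul_of_isBigO_one (isBigO_mul_of_isBigO_one
    ((isBigO_pow_of_isBigO_one hd.isBigO_sigmaPsi 2).const_mul_left (1 / 2)) isBigO_s_sq)
    hd.isBigO_wPsiSY_sq_div_wPsiYY_sub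
  refine (((isBigO_mul_of_isBigO_one hd.isBigO_U1 hpenalty).sub hdiffusion).add
    (isBigO_mul_of_isBigO_one hd.isBigO_cubicCoeff (isBigO_refl _ _))).congr' ?_ .rfl
  filter_upwards [eventually_mem_smallAversion] with ⟨ψ, t, s, y⟩ ⟨hψ, hx⟩
  exact (hpde.wPsiT_add_maxHam_eq hx (hd.U1_pos y).ne' (hd.f2_pos hx).ne' hψ.ne').symm

end Assumptions

end HedgeData

theorem hjbi_upper_bound_candidate_volatility_general (d : HedgeData) (hd : d.Assumptions)
    (hpde : d.CorrectorPDEs) :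
    ∃ C > 0, ∃ ψ₀ > 0, ∀ ψ ∈ Ioo 0 ψ₀, ∀ t s y, (t, s, y) ∈ d.domain →
      BddAbove (range fun ϑ ↦ d.Ham ψ t s y ϑ (d.sigmaPsi ψ t s y)) ∧
      |d.wPsiT ψ t s y + ⨆ ϑ, d.Ham ψ t s y ϑ (d.sigmaPsi ψ t s y)| ≤ C * ψ ^ 3 := by
  obtain ⟨C, hC, hbound⟩ := (hd.isBigO_wPsiT_add_maxHam hpde).exists_pos
  obtain ⟨ψ₀, hψ₀, h⟩ :=
    HedgeData.eventually_smallAversion_iff.1 (hbound.bound.and hd.eventually_wPsiYY_neg)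
  refine ⟨C, hC, ψ₀, hψ₀, fun ψ hψ t s y hx ↦ ?_⟩
  obtain ⟨hres, hyy⟩ := h ψ hψ (t, s, y) hx
  have hmax := HedgeData.isGreatest_ham hyy (d.sigmaPsi ψ t s y)
  refine ⟨hmax.bddAbove, ?_⟩
  rw [iSup, hmax.csSup_eq, ← abs_of_pos (pow_pos hψ.1 3)]
  exact hres

/-- **Upper HJBI bound at the candidate volatility:** there are `C > 0` and `ψ₀ > 0` such
that for every `(t,s,y) ∈ D` and `ψ ∈ (0,ψ₀)`,
`w^ψ_t + sup_{ϑ ∈ ℝ} H^ψ(t,s,y; ϑ, σ^ψ(t,s,y)) ≤ C ψ³`. -/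
theorem hjbi_upper_bound_candidate_volatility (d : HedgeData) (hd : d.Assumptions)
    (hpde : d.PDEAssumptions) :
    ∃ C > (0:ℝ), ∃ ψ₀ > (0:ℝ),
      ∀ t ∈ Ioo (0:ℝ) d.T, ∀ s ∈ Ioo d.K⁻¹ d.K, ∀ y ∈ Ioo d.yl d.yu, ∀ ψ ∈ Ioo (0:ℝ) ψ₀,
        d.wPsiT ψ t s y + (⨆ ϑ : ℝ, d.Ham ψ t s y ϑ (d.sigmaPsi ψ t s y))
          ≤ C * ψ ^ 3 := by
  obtain ⟨C, hC, ψ₀, hψ₀, h⟩ :=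
    hjbi_upper_bound_candidate_volatility_general d hd hpde.correctorPDEs
  exact ⟨C, hC, ψ₀, hψ₀, fun t ht s hs y hy ψ hψ ↦
    (le_abs_self _).trans (h ψ hψ t s y ⟨ht, hs, hy⟩).2⟩
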